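/- arXiv:1305.5810 — 9 statements merged into one kernel-verified Lean document; each statement's English description precedes it below -/
import Mathlib

section
/- Let T : ℝ^N → 2^{ℝ^N} be a maximal monotone operator whose domain D(T) := {x : T(x) ≠ ∅} has nonempty interior. Let K ⊂ int(D(T)) be a compact set and let 0 < ε̲ < ε̄ < +∞. Then there exist nonnegative constants A and B such that for any (ε₁, x¹), (ε₂, x²) ∈ [ε̲, ε̄] × K and any v¹ ∈ T^{ε₁}(x¹), there exists v² ∈ T^{ε₂}(x²) satisfying ‖v¹ − v²‖ ≤ A‖x¹ − x²‖ + B|ε₁ − ε₂|. -/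
/-!
Two facts carry the theorem. First, all enlargements `T^ε` with `ε` bounded are uniformly bounded
on compact subsets of the interior of the domain (`enl_bounded_compact`). Second, enlargements obey
a transportation formula (`enl_transport`): the convex combination, with weights `1 - θ` and `θ`,
of points `(x, v)` and `(x', v')` of the graphs of `T^ε` and `T^ε'` lies in the graph of an
enlargement whose parameter is the same convex combination of `ε` and `ε'`, plus
`θ (1 - θ) ⟪x - x', v - v'⟫`.

Given `v₁ ∈ T^ε₁(x₁)` and `d = ‖x₁ - x₂‖`, prolong the segment from `x₁` to `x₂` by a fixed length
`δ` to a point `x₃` still inside the domain, so that `x₂ = (1 - θ) x₁ + θ x₃` with `θ = d / (d + δ)`.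
Combining `v₁` with an element of `T x₃` gives a vector in `T^(ε₂ + s)(x₂)` at distance `O(d)`
from `v₁`, where `s = |ε₁ - ε₂| + O(d)`. Mixing in an element of `T x₂` with weight
`s / (s + ε₂) ≤ s / εlo` brings the parameter back down to `ε₂` and moves the vector by `O(s)`.
-/

open scoped RealInnerProductSpace
open Filter Topology

/-- Shorthand for Euclidean space `ℝ^N`. -/
abbrev Euc (N : ℕ) := EuclideanSpace ℝ (Fin N)

/-- A set-valued operator `T : ℝ^N → 2^{ℝ^N}` is monotone if
`⟪u - v, x - y⟫ ≥ 0` for all `u ∈ T x`, `v ∈ T y`. -/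
def IsMonotoneOp {N : ℕ} (T : Euc N → Set (Euc N)) : Prop :=
  ∀ x y u v, u ∈ T x → v ∈ T y → 0 ≤ ⟪u - v, x - y⟫

/-- `T` is maximal monotone: it is monotone and every monotone operator whose
values contain those of `T` coincides with `T`. -/
def IsMaximalMonotoneOp {N : ℕ} (T : Euc N → Set (Euc N)) : Prop :=
  IsMonotoneOp T ∧
    ∀ S : Euc N → Set (Euc N), IsMonotoneOp S → (∀ x, T x ⊆ S x) → S = T

/-- The ε-enlargement of `T`:
`T^ε(x) = {x* : ⟪y* - x*, y - x⟫ ≥ -ε for all (y, y*) ∈ Gr T}`. -/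
def enl {N : ℕ} (T : Euc N → Set (Euc N)) (ε : ℝ) (x : Euc N) : Set (Euc N) :=
  {xs | ∀ y ys, ys ∈ T y → ⟪ys - xs, y - x⟫ ≥ -ε}

theorem subset_enl_zero {N : ℕ} {T : Euc N → Set (Euc N)} (hT : IsMonotoneOp T) {x v : Euc N}
    (hv : v ∈ T x) : v ∈ enl T 0 x := by
  intro y ys hys
  simpa using hT y x ys v hys hv

theorem enl_mono {N : ℕ} {T : Euc N → Set (Euc N)} {ε ε' : ℝ} (h : ε ≤ ε') {x v : Euc N}
    (hv : v ∈ enl T ε x) : v ∈ enl T ε' x := by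
  intro y ys hys
  have := hv y ys hys
  linarith

/-- Transportation formula: convex combinations of points in the graphs of two enlargements lie in
the graph of an enlargement with an explicit parameter. -/
theorem enl_transport {N : ℕ} {T : Euc N → Set (Euc N)} {ε ε' θ : ℝ} (h0 : 0 ≤ θ) (h1 : θ ≤ 1)
    {x x' v v' : Euc N} (hv : v ∈ enl T ε x) (hv' : v' ∈ enl T ε' x') :
    (1 - θ) • v + θ • v' ∈
      enl T ((1 - θ) * ε + θ * ε' + θ * (1 - θ) * ⟪x - x', v - v'⟫) ((1 - θ) • x + θ • x') := by
  intro y ys hys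
  have a := mul_le_mul_of_nonneg_left (hv y ys hys) (sub_nonneg.2 h1)
  have b := mul_le_mul_of_nonneg_left (hv' y ys hys) h0
  have key : ⟪ys - ((1 - θ) • v + θ • v'), y - ((1 - θ) • x + θ • x')⟫
      = (1 - θ) * ⟪ys - v, y - x⟫ + θ * ⟪ys - v', y - x'⟫
        - θ * (1 - θ) * ⟪x - x', v - v'⟫ := by
    simp only [inner_sub_left, inner_sub_right, inner_add_left, inner_add_right,
      real_inner_smul_left, real_inner_smul_right, real_inner_comm v, real_inner_comm v']
    ring
  rw [key]
  linarith

theorem norm_le_sum_abs_inner {N : ℕ} (v : Euc N) :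
    ‖v‖ ≤ ∑ i, |⟪v, EuclideanSpace.basisFun (Fin N) ℝ i⟫| := by
  set b := EuclideanSpace.basisFun (Fin N) ℝ with hb
  calc ‖v‖ = ‖∑ i, ⟪b i, v⟫ • b i‖ := by rw [b.sum_repr' v]
    _ ≤ ∑ i, ‖⟪b i, v⟫ • b i‖ := norm_sum_le _ _
    _ = _ := by
      refine Finset.sum_congr rfl fun i _ => ?_
      rw [norm_smul, b.norm_eq_one, mul_one, Real.norm_eq_abs, real_inner_comm]

/-- Local boundedness of an enlargement at an interior point `x₀` of the domain. The defining
inequality is tested against the `2N` vertices `x₀ ± r eᵢ` of a cross-polytope inside the domain,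
which bounds every coordinate of `v`, up to a small multiple of `‖v‖` that is absorbed. -/
theorem enl_locally_bounded {N : ℕ} (T : Euc N → Set (Euc N)) (ε : ℝ) (x₀ : Euc N)
    (hx₀ : x₀ ∈ interior {x : Euc N | (T x).Nonempty}) :
    ∃ ρ > 0, ∃ M : ℝ, ∀ x ∈ Metric.ball x₀ ρ, ∀ v ∈ enl T ε x, ‖v‖ ≤ M := by
  obtain ⟨R, hR, hball⟩ := Metric.isOpen_iff.1 isOpen_interior x₀ hx₀
  have hD : ∀ x ∈ Metric.ball x₀ R, (T x).Nonempty := fun x hx =>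
    interior_subset (s := {x : Euc N | (T x).Nonempty}) (hball hx)
  set b := EuclideanSpace.basisFun (Fin N) ℝ with hb
  obtain ⟨r, hr, hrR⟩ : ∃ r, 0 < r ∧ r < R := ⟨R / 2, by linarith, by linarith⟩
  choose! u hu using hD
  have hp : ∀ i, ∀ s : ℝ, |s| = r → x₀ + s • b i ∈ Metric.ball x₀ R := by
    intro i s hs
    simpa [norm_smul, hs] using hrR
  set f : Fin N → ℝ := fun i => (‖u (x₀ + r • b i)‖ + ‖u (x₀ + (-r) • b i)‖) * (2 * r) with hf
  have hf0 : ∀ i, 0 ≤ f i := fun i => by positivity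
  set C : ℝ := ε + ∑ i, f i with hC
  have hfC : ∀ i, ε + f i ≤ C := fun i => by
    have := Finset.single_le_sum (fun j _ => hf0 j) (Finset.mem_univ i)
    linarith
  have hN : (0 : ℝ) < N + 1 := by positivity
  have hρ : 0 < r / (2 * (N + 1)) := by positivity
  refine ⟨r / (2 * (N + 1)), hρ, 2 * N * C / r, fun x hx v hv => ?_⟩
  have hxn : ‖x - x₀‖ ≤ r / (2 * (N + 1)) := by
    rw [← dist_eq_norm]; exact (Metric.mem_ball.1 hx).le
  have hρr : r / (2 * (N + 1)) ≤ r := div_le_self hr.le (by linarith [Nat.cast_nonneg (α := ℝ) N])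
  have test : ∀ i, ∀ s : ℝ, |s| = r → ‖u (x₀ + s • b i)‖ * (2 * r) ≤ f i →
      s * ⟪v, b i⟫ ≤ C + ‖v‖ * (r / (2 * (N + 1))) := by
    intro i s hs hsf
    have h1 := hv _ _ (hu _ (hp i s hs))
    have h2 : ⟪u (x₀ + s • b i), x₀ + s • b i - x⟫ ≤ ‖u (x₀ + s • b i)‖ * (2 * r) := by
      refine (real_inner_le_norm _ _).trans (mul_le_mul_of_nonneg_left ?_ (norm_nonneg _))
      calc ‖x₀ + s • b i - x‖ = ‖s • b i - (x - x₀)‖ := by congr 1; abel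
        _ ≤ ‖s • b i‖ + ‖x - x₀‖ := norm_sub_le _ _
        _ ≤ 2 * r := by
          rw [norm_smul, b.norm_eq_one, Real.norm_eq_abs, hs]; linarith
    have h3 : ⟪v, x₀ + s • b i - x⟫ = s * ⟪v, b i⟫ - ⟪v, x - x₀⟫ := by
      simp only [inner_sub_right, inner_add_right, real_inner_smul_right]; ring
    have h4 : ⟪v, x - x₀⟫ ≤ ‖v‖ * (r / (2 * (N + 1))) :=
      (real_inner_le_norm _ _).trans (mul_le_mul_of_nonneg_left hxn (norm_nonneg _))
    rw [inner_sub_left] at h1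
    linarith [hfC i]
  have hcoord : ∀ i, |⟪v, b i⟫| ≤ (C + ‖v‖ * (r / (2 * (N + 1)))) / r := by
    intro i
    have h1 := test i r (abs_of_pos hr) (by
      simp only [hf]; gcongr; linarith [norm_nonneg (u (x₀ + (-r) • b i))])
    have h2 := test i (-r) (by rw [abs_neg, abs_of_pos hr]) (by
      simp only [hf]; gcongr; linarith [norm_nonneg (u (x₀ + r • b i))])
    rw [le_div_iff₀ hr]
    rcases abs_cases ⟪v, b i⟫ with h | h <;> rw [h.1] <;> linarith
  have hsum : ‖v‖ ≤ N * ((C + ‖v‖ * (r / (2 * (N + 1)))) / r) := by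
    refine (norm_le_sum_abs_inner v).trans ((Finset.sum_le_sum fun i _ => hcoord i).trans ?_)
    simp
  have heq : N * ((C + ‖v‖ * (r / (2 * (N + 1)))) / r)
      = N * C / r + ‖v‖ / 2 * (N / (N + 1)) := by
    field_simp
  have hle : ‖v‖ / 2 * (N / (N + 1)) ≤ ‖v‖ / 2 * 1 := by
    gcongr
    rw [div_le_one hN]; linarith
  have h2 : 2 * N * C / r = 2 * (N * C / r) := by ring
  linarith

theorem enl_bounded_compact {N : ℕ} (T : Euc N → Set (Euc N)) (ε : ℝ)
    (K : Set (Euc N)) (hK : IsCompact K) (hKD : K ⊆ interior {x : Euc N | (T x).Nonempty}) :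
    ∃ M : ℝ, 0 ≤ M ∧ ∀ x ∈ K, ∀ v ∈ enl T ε x, ‖v‖ ≤ M := by
  refine hK.induction_on (p := fun s => ∃ M : ℝ, 0 ≤ M ∧ ∀ x ∈ s, ∀ v ∈ enl T ε x, ‖v‖ ≤ M)
    ⟨0, le_rfl, by simp⟩ ?_ ?_ ?_
  · rintro s t hst ⟨M, hM, h⟩
    exact ⟨M, hM, fun x hx => h x (hst hx)⟩
  · rintro s t ⟨M, hM, h⟩ ⟨M', hM', h'⟩
    refine ⟨max M M', le_max_of_le_left hM, ?_⟩
    rintro x (hx | hx) v hv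
    · exact (h x hx v hv).trans (le_max_left _ _)
    · exact (h' x hx v hv).trans (le_max_right _ _)
  · intro x hx
    obtain ⟨ρ, hρ, M, h⟩ := enl_locally_bounded T ε x (hKD hx)
    exact ⟨_, mem_nhdsWithin_of_mem_nhds (Metric.ball_mem_nhds x hρ), max M 0, le_max_right _ _,
      fun y hy v hv => (h y hy v hv).trans (le_max_left _ _)⟩

/-- A point `x₂` at distance `d` from `x₁` is the convex combination of `x₁` and of a point `x₃`
within `δ` of `x₂`, the weight of `x₃` being `d / (d + δ)`. -/
theorem exists_prolongation {N : ℕ} {δ : ℝ} (hδ : 0 < δ) (x₁ x₂ : Euc N) :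
    ∃ x₃ : Euc N, ‖x₃ - x₂‖ ≤ δ ∧
      (1 - ‖x₁ - x₂‖ / (‖x₁ - x₂‖ + δ)) • x₁ + (‖x₁ - x₂‖ / (‖x₁ - x₂‖ + δ)) • x₃ = x₂ := by
  rcases eq_or_ne x₁ x₂ with rfl | hne
  · exact ⟨x₁, by simpa using hδ.le, by simp⟩
  have hd : 0 < ‖x₁ - x₂‖ := norm_pos_iff.2 (sub_ne_zero.2 hne)
  refine ⟨x₂ + (δ / ‖x₁ - x₂‖) • (x₂ - x₁), ?_, ?_⟩
  · rw [add_sub_cancel_left, norm_smul, norm_sub_rev x₂, Real.norm_eq_abs,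
      abs_of_pos (by positivity), div_mul_cancel₀ _ hd.ne']
  · generalize ‖x₁ - x₂‖ = d at hd
    have h : d + δ ≠ 0 := by positivity
    match_scalars <;> field_simp
    ring

/-- Lipschitz-type continuity of the ε-enlargement of a maximal
monotone operator on a compact subset of the interior of its domain. -/
theorem stmt2 {N : ℕ} (T : Euc N → Set (Euc N))
    (hT : IsMaximalMonotoneOp T)
    (hDom : (interior {x : Euc N | (T x).Nonempty}).Nonempty)
    (K : Set (Euc N)) (hK : IsCompact K)
    (hKD : K ⊆ interior {x : Euc N | (T x).Nonempty})
    (εlo εhi : ℝ) (hlo : 0 < εlo) (hmid : εlo < εhi) :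
    ∃ A B : ℝ, 0 ≤ A ∧ 0 ≤ B ∧
      ∀ ε₁ ε₂ : ℝ, ε₁ ∈ Set.Icc εlo εhi → ε₂ ∈ Set.Icc εlo εhi →
        ∀ x₁ x₂ : Euc N, x₁ ∈ K → x₂ ∈ K →
          ∀ v₁ ∈ enl T ε₁ x₁, ∃ v₂ ∈ enl T ε₂ x₂,
            ‖v₁ - v₂‖ ≤ A * ‖x₁ - x₂‖ + B * |ε₁ - ε₂| := by
  obtain ⟨δ, hδ, hδD⟩ := hK.exists_cthickening_subset_open isOpen_interior hKD
  obtain ⟨M, hM, hbd⟩ := enl_bounded_compact T εhi _ hK.cthickening hδD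
  have hsub : K ⊆ Metric.cthickening δ K := Metric.self_subset_cthickening K
  refine ⟨2 * M / δ + 4 * M ^ 2 / εlo, 2 * M / εlo, by positivity, by positivity, ?_⟩
  intro ε₁ ε₂ hε₁ hε₂ x₁ x₂ hx₁ hx₂ v₁ hv₁
  obtain ⟨x₃, hx₃, hcomb⟩ := exists_prolongation hδ x₁ x₂
  have hx₃K : x₃ ∈ Metric.cthickening δ K :=
    Metric.mem_cthickening_of_dist_le x₃ x₂ δ K hx₂ (by rwa [dist_eq_norm])
  obtain ⟨v₃, hv₃⟩ : (T x₃).Nonempty :=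
    interior_subset (s := {x : Euc N | (T x).Nonempty}) (hδD hx₃K)
  obtain ⟨w, hw⟩ : (T x₂).Nonempty :=
    interior_subset (s := {x : Euc N | (T x).Nonempty}) (hKD hx₂)
  replace hv₃ := subset_enl_zero hT.1 hv₃
  replace hw := subset_enl_zero hT.1 hw
  have hεhi : 0 ≤ εhi := by linarith
  have nv₁ : ‖v₁‖ ≤ M := hbd x₁ (hsub hx₁) v₁ (enl_mono hε₁.2 hv₁)
  have nv₃ : ‖v₃‖ ≤ M := hbd x₃ hx₃K v₃ (enl_mono hεhi hv₃)
  have nw : ‖w‖ ≤ M := hbd x₂ (hsub hx₂) w (enl_mono hεhi hw)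
  have hx₁₃ : ‖x₁ - x₃‖ ≤ ‖x₁ - x₂‖ + δ := by
    have := norm_sub_le_norm_sub_add_norm_sub x₁ x₂ x₃
    rw [norm_sub_rev x₂ x₃] at this
    linarith
  have hd0 := norm_nonneg (x₁ - x₂)
  generalize ‖x₁ - x₂‖ = d at *
  set θ := d / (d + δ) with hθ
  have hdδ : 0 < d + δ := by positivity
  have hθ0 : 0 ≤ θ := by positivity
  have hθ1 : θ ≤ 1 := by rw [hθ, div_le_one hdδ]; linarith
  have hθd : θ ≤ d / δ := by rw [hθ]; gcongr; linarith
  have hθmul : θ * ((1 - θ) * (d + δ)) ≤ d := by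
    have h1 : θ * (d + δ) = d := div_mul_cancel₀ _ hdδ.ne'
    nlinarith
  have nv₁₃ : ‖v₁ - v₃‖ ≤ 2 * M := (norm_sub_le _ _).trans (by linarith)
  have hinner : ⟪x₁ - x₃, v₁ - v₃⟫ ≤ (d + δ) * (2 * M) :=
    (real_inner_le_norm _ _).trans (by gcongr)
  set s := |ε₁ - ε₂| + 2 * M * d with hs
  have hs0 : 0 ≤ s := by positivity
  have hε₂0 : 0 < ε₂ := hlo.trans_le hε₂.1
  have hu := enl_transport hθ0 hθ1 hv₁ hv₃
  rw [hcomb] at hu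
  set u := (1 - θ) • v₁ + θ • v₃ with hudef
  have nu : ‖u‖ ≤ M := by
    calc ‖u‖ ≤ ‖(1 - θ) • v₁‖ + ‖θ • v₃‖ := norm_add_le _ _
      _ = (1 - θ) * ‖v₁‖ + θ * ‖v₃‖ := by
        rw [norm_smul, norm_smul, Real.norm_of_nonneg hθ0, Real.norm_of_nonneg (by linarith)]
      _ ≤ (1 - θ) * M + θ * M := by
        have : 0 ≤ 1 - θ := by linarith
        gcongr
      _ = M := by ring
  have huε : u ∈ enl T (ε₂ + s) x₂ := by
    refine enl_mono ?_ hu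
    have h1 := mul_le_mul_of_nonneg_left hinner (mul_nonneg hθ0 (sub_nonneg.2 hθ1))
    have h2 := mul_le_mul_of_nonneg_right hθmul (by positivity : 0 ≤ 2 * M)
    have h3 := le_abs_self (ε₁ - ε₂)
    have h4 : 0 ≤ θ * ε₁ := mul_nonneg hθ0 (hlo.le.trans hε₁.1)
    linarith
  -- The weight for which `(1 - t) * (ε₂ + s) = ε₂`.
  set t := s / (ε₂ + s) with ht
  have hst : 0 < ε₂ + s := by positivity
  have ht0 : 0 ≤ t := by positivity
  have ht1 : t ≤ 1 := by rw [ht, div_le_one hst]; linarith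
  have hts : t ≤ s / εlo := by rw [ht]; gcongr; linarith [hε₂.1]
  have hv₂ := enl_transport ht0 ht1 huε hw
  refine ⟨(1 - t) • u + t • w, ?_, ?_⟩
  · have hx : (1 - t) • x₂ + t • x₂ = x₂ := by rw [← add_smul]; simp
    rw [hx] at hv₂
    refine enl_mono (le_of_eq ?_) hv₂
    rw [sub_self, inner_zero_left, ht]
    field_simp
    ring
  · have e : v₁ - ((1 - t) • u + t • w) = θ • (v₁ - v₃) + t • (u - w) := by
      rw [hudef]; module
    have nuw : ‖u - w‖ ≤ 2 * M := (norm_sub_le _ _).trans (by linarith)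
    calc ‖v₁ - ((1 - t) • u + t • w)‖ ≤ ‖θ • (v₁ - v₃)‖ + ‖t • (u - w)‖ := by
          rw [e]; exact norm_add_le _ _
      _ = θ * ‖v₁ - v₃‖ + t * ‖u - w‖ := by
        rw [norm_smul, norm_smul, Real.norm_of_nonneg hθ0, Real.norm_of_nonneg ht0]
      _ ≤ d / δ * (2 * M) + s / εlo * (2 * M) := by gcongr
      _ = _ := by rw [hs]; field_simp; ring
end

section
/- (Transportation Formula) Let T : ℝ^N → 2^{ℝ^N} be a maximal monotone operator. Consider m triplets (ε_i, z^i, w^i) with ε_i ≥ 0 and w^i ∈ T^{ε_i}(z^i) for i = 1,…,m. For any α in the unit simplex Δ_m, set x̂ := Σᵢ α_i z^i, û := Σᵢ α_i w^i, and ε̂ := Σᵢ α_i ε_i + Σᵢ α_i ⟨w^i − û, z^i − x̂⟩. Then ε̂ ≥ 0 and û ∈ T^{ε̂}(x̂). -/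
/-!
Writing `q - w i = (q - û) - (w i - û)` and `p - z i = (p - x̂) - (z i - x̂)`, the cross terms
average to zero because `x̂`, `û` are the barycentres of `z`, `w`; this gives the bilinear
variance identity `sum_inner_sub_eq`. Averaging the inequalities defining `w i ∈ T^{ε i}(z i)`
then yields exactly `û ∈ T^{ε̂}(x̂)`. Nonnegativity of `ε̂` comes from maximality: an enlargement
of a maximal monotone operator with negative parameter has empty values, since a point
`u ∈ T^ε(x)` with `ε ≤ 0` is monotonically related to the whole graph, hence lies in `T x`,
and testing against `(x, u)` itself gives `0 ≥ -ε`.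
-/

open scoped RealInnerProductSpace
open Filter Topology

/-- Bilinear variance decomposition around the barycentres of `z` and `w`. -/
lemma sum_inner_sub_eq {N m : ℕ} (z w : Fin m → Euc N) (α : Fin m → ℝ)
    (hαsum : ∑ i, α i = 1) (x u : Euc N) (hx : x = ∑ i, α i • z i)
    (hu : u = ∑ i, α i • w i) (p q : Euc N) :
    ∑ i, α i * ⟪q - w i, p - z i⟫ = ⟪q - u, p - x⟫ + ∑ i, α i * ⟪w i - u, z i - x⟫ := by
  have hz : ∑ i, α i • (z i - x) = 0 := by
    simp only [smul_sub, Finset.sum_sub_distrib, ← Finset.sum_smul, hαsum, one_smul, ← hx, sub_self]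
  have hw : ∑ i, α i • (w i - u) = 0 := by
    simp only [smul_sub, Finset.sum_sub_distrib, ← Finset.sum_smul, hαsum, one_smul, ← hu, sub_self]
  have cz : ∑ i, α i * ⟪q - u, z i - x⟫ = 0 := by
    simp only [← real_inner_smul_right, ← inner_sum, hz, inner_zero_right]
  have cw : ∑ i, α i * ⟪w i - u, p - x⟫ = 0 := by
    simp only [← real_inner_smul_left, ← sum_inner, hw, inner_zero_left]
  have pt : ∀ i, α i * ⟪q - w i, p - z i⟫ = α i * ⟪q - u, p - x⟫ - α i * ⟪q - u, z i - x⟫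
      - α i * ⟪w i - u, p - x⟫ + α i * ⟪w i - u, z i - x⟫ := by
    intro i
    rw [← sub_sub_sub_cancel_right q (w i) u, ← sub_sub_sub_cancel_right p (z i) x,
      inner_sub_left, inner_sub_right (q - u), inner_sub_right (w i - u)]
    ring
  simp only [pt, Finset.sum_add_distrib, Finset.sum_sub_distrib, cz, cw, ← Finset.sum_mul, hαsum]
  ring

/-- A point monotonically related to the whole graph of a maximal monotone operator belongs to
the graph. -/
lemma IsMaximalMonotoneOp.mem_of_forall {N : ℕ} {T : Euc N → Set (Euc N)}
    (hT : IsMaximalMonotoneOp T) {x u : Euc N}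
    (h : ∀ y ys, ys ∈ T y → 0 ≤ ⟪ys - u, y - x⟫) : u ∈ T x := by
  have hS : (fun y => T y ∪ {v | y = x ∧ v = u}) = T := by
    refine hT.2 _ ?_ fun y => Set.subset_union_left
    rintro a b c d (hc | ⟨rfl, rfl⟩) (hd | ⟨rfl, rfl⟩)
    · exact hT.1 a b c d hc hd
    · exact h a c hc
    · rw [← neg_sub d, ← neg_sub b, inner_neg_neg]
      exact h b d hd
    · simp
  rw [← hS]
  exact Or.inr ⟨rfl, rfl⟩

lemma IsMaximalMonotoneOp.nonneg_of_mem_enl {N : ℕ} {T : Euc N → Set (Euc N)}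
    (hT : IsMaximalMonotoneOp T) {ε : ℝ} {x u : Euc N} (h : u ∈ enl T ε x) : 0 ≤ ε := by
  by_contra! hneg
  have hmem : u ∈ T x := hT.mem_of_forall fun y ys hy => by linarith [h y ys hy]
  have := h x u hmem
  simp only [sub_self, inner_zero_left] at this
  linarith

/-- Transportation Formula: given `m` triplets
`(ε i, z i, w i)` with `ε i ≥ 0` and `w i ∈ T^{ε i}(z i)` and `α` in the unit
simplex, the convex combinations `x̂ = Σ α i • z i`, `û = Σ α i • w i` and
`ε̂ = Σ α i * ε i + Σ α i * ⟪w i - û, z i - x̂⟫` satisfy `ε̂ ≥ 0` and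
`û ∈ T^{ε̂}(x̂)`. -/
theorem stmt4 {N : ℕ} (T : Euc N → Set (Euc N))
    (hT : IsMaximalMonotoneOp T) (m : ℕ)
    (ε : Fin m → ℝ) (z w : Fin m → Euc N)
    (hε : ∀ i, 0 ≤ ε i) (hw : ∀ i, w i ∈ enl T (ε i) (z i))
    (α : Fin m → ℝ) (hα : ∀ i, 0 ≤ α i) (hαsum : ∑ i, α i = 1)
    (xhat uhat : Euc N) (εhat : ℝ)
    (hxhat : xhat = ∑ i, α i • z i)
    (huhat : uhat = ∑ i, α i • w i)
    (hεhat : εhat = ∑ i, α i * ε i + ∑ i, α i * ⟪w i - uhat, z i - xhat⟫) :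
    0 ≤ εhat ∧ uhat ∈ enl T εhat xhat := by
  have hmem : uhat ∈ enl T εhat xhat := by
    intro y ys hy
    have key := sum_inner_sub_eq z w α hαsum xhat uhat hxhat huhat y ys
    have hsum : ∑ i, α i * -ε i ≤ ∑ i, α i * ⟪ys - w i, y - z i⟫ :=
      Finset.sum_le_sum fun i _ => mul_le_mul_of_nonneg_left (hw i y ys hy) (hα i)
    simp only [mul_neg, Finset.sum_neg_distrib] at hsum
    linarith
  exact ⟨hT.nonneg_of_mem_enl hmem, hmem⟩
end

section
/- Let T : ℝ^N → 2^{ℝ^N} be a maximal monotone operator and let (z^i, w^i), i = 1,…,m, satisfy w^i ∈ T(z^i). Let x̃ ∈ ℝ^N and ρ > 0 be such that ‖z^i − x̃‖ ≤ ρ for all i ≤ m. Then for any α in the unit simplex Δ_m, the convex combination (x̂, û) := (Σᵢ α_i z^i, Σᵢ α_i w^i) satisfies ‖x̂ − x̃‖ ≤ ρ and û ∈ T^{ε̂}(x̂), where ε̂ := Σᵢ α_i ⟨w^i − û, z^i − x̂⟩ satisfies ε̂ ≤ 2ρM with M := max{‖w^i‖ : i = 1,…,m}. -/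
/-!
Everything rests on the barycentre identity `sum_inner_sub_sub`: for every `(p, q)`,
`∑ αᵢ ⟪wᵢ - q, zᵢ - p⟫ = ε̂ + ⟪û - q, x̂ - p⟫`.
For `(p, q)` in the graph of `T` the left side is nonnegative by monotonicity, which is the
membership of `û` in the `ε̂`-enlargement at `x̂`. For `(p, q) = (x̂, 0)` it gives
`ε̂ = ∑ αᵢ ⟪wᵢ, zᵢ - x̂⟫`, and Cauchy-Schwarz with `‖zᵢ - x̂‖ ≤ 2ρ` bounds this by `2ρM`.
The bound `‖x̂ - x̃‖ ≤ ρ` is convexity of the closed ball.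
-/

open scoped RealInnerProductSpace
open Filter Topology

/-- The weighted sum of pairings about an arbitrary base point `(p, q)` splits as the sum about the
barycentre plus the pairing of the barycentre itself; the cross terms vanish because the weighted
deviations from a barycentre sum to zero. -/
lemma sum_inner_sub_sub {E ι : Type*} [NormedAddCommGroup E] [InnerProductSpace ℝ E] [Fintype ι]
    (z w : ι → E) (α : ι → ℝ) (hα : ∑ i, α i = 1) (x u : E)
    (hx : x = ∑ i, α i • z i) (hu : u = ∑ i, α i • w i) (p q : E) :
    ∑ i, α i * ⟪w i - q, z i - p⟫ = ∑ i, α i * ⟪w i - u, z i - x⟫ + ⟪u - q, x - p⟫ := by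
  have hz0 : ∑ i, α i • (z i - x) = 0 := by
    simp only [smul_sub, Finset.sum_sub_distrib, ← Finset.sum_smul, hα, one_smul, ← hx, sub_self]
  have hw0 : ∑ i, α i • (w i - u) = 0 := by
    simp only [smul_sub, Finset.sum_sub_distrib, ← Finset.sum_smul, hα, one_smul, ← hu, sub_self]
  have h1 : ∑ i, α i * ⟪w i - u, x - p⟫ = 0 := by
    simp only [← real_inner_smul_left, ← sum_inner, hw0, inner_zero_left]
  have h2 : ∑ i, α i * ⟪u - q, z i - x⟫ = 0 := by
    simp only [← real_inner_smul_right, ← inner_sum, hz0, inner_zero_right]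
  have h3 : ∑ i, α i * ⟪u - q, x - p⟫ = ⟪u - q, x - p⟫ := by
    rw [← Finset.sum_mul, hα, one_mul]
  have key : ∀ i, α i * ⟪w i - q, z i - p⟫ = α i * ⟪w i - u, z i - x⟫ + α i * ⟪w i - u, x - p⟫
      + α i * ⟪u - q, z i - x⟫ + α i * ⟪u - q, x - p⟫ := by
    intro i
    rw [← sub_add_sub_cancel (w i) u q, ← sub_add_sub_cancel (z i) x p, inner_add_left,
      inner_add_right, inner_add_right]
    ring
  rw [Finset.sum_congr rfl fun i _ => key i]
  simp only [Finset.sum_add_distrib, h1, h2, h3, add_zero]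

/-- Transportation formula with `ε i = 0` and a bound on `ε̂`:
if `w i ∈ T(z i)` and all `z i` lie in the ball of radius `ρ` around `x̃`,
then the convex combination `(x̂, û)` satisfies `‖x̂ - x̃‖ ≤ ρ`,
`û ∈ T^{ε̂}(x̂)` and `ε̂ ≤ 2ρM` where `M = max_i ‖w i‖`. -/
theorem stmt5 {N : ℕ} (T : Euc N → Set (Euc N))
    (hT : IsMaximalMonotoneOp T) (m : ℕ) (hm : 0 < m)
    (z w : Fin m → Euc N) (hw : ∀ i, w i ∈ T (z i))
    (xtil : Euc N) (ρ : ℝ) (hρ : 0 < ρ) (hz : ∀ i, ‖z i - xtil‖ ≤ ρ)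
    (α : Fin m → ℝ) (hα : ∀ i, 0 ≤ α i) (hαsum : ∑ i, α i = 1)
    (xhat uhat : Euc N) (εhat M : ℝ)
    (hxhat : xhat = ∑ i, α i • z i)
    (huhat : uhat = ∑ i, α i • w i)
    (hεhat : εhat = ∑ i, α i * ⟪w i - uhat, z i - xhat⟫)
    (hM : M = (Finset.univ.sup' (Finset.univ_nonempty_iff.mpr
      ⟨⟨0, hm⟩⟩) fun i => ‖w i‖)) :
    ‖xhat - xtil‖ ≤ ρ ∧ uhat ∈ enl T εhat xhat ∧ εhat ≤ 2 * ρ * M := by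
  have hball : ‖xhat - xtil‖ ≤ ρ := by
    have h := (convex_closedBall xtil ρ).sum_mem (t := Finset.univ) (fun i _ => hα i) hαsum
      (fun i _ => mem_closedBall_iff_norm.mpr (hz i))
    rw [← hxhat] at h
    exact mem_closedBall_iff_norm.mp h
  have key := sum_inner_sub_sub z w α hαsum xhat uhat hxhat huhat
  rw [← hεhat] at key
  refine ⟨hball, ?_, ?_⟩
  · intro y ys hys
    have hnonneg : 0 ≤ ∑ i, α i * ⟪w i - ys, z i - y⟫ :=
      Finset.sum_nonneg fun i _ => mul_nonneg (hα i) (hT.1 _ _ _ _ (hw i) hys)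
    have hneg : ⟪ys - uhat, y - xhat⟫ = ⟪uhat - ys, xhat - y⟫ := by
      rw [← neg_sub uhat ys, ← neg_sub xhat y, inner_neg_neg]
    rw [key] at hnonneg
    rw [hneg]
    linarith
  · have hε := key xhat 0
    simp only [sub_zero, sub_self, inner_zero_right, add_zero] at hε
    have hbound : ∀ i, ⟪w i, z i - xhat⟫ ≤ 2 * ρ * M := by
      intro i
      have hwM : ‖w i‖ ≤ M := by
        rw [hM]
        exact Finset.le_sup' (fun i => ‖w i‖) (Finset.mem_univ i)
      have hzx : ‖z i - xhat‖ ≤ 2 * ρ := by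
        have h := norm_sub_le_norm_sub_add_norm_sub (z i) xtil xhat
        rw [norm_sub_rev xtil xhat] at h
        linarith [hz i]
      calc ⟪w i, z i - xhat⟫ ≤ ‖w i‖ * ‖z i - xhat‖ := real_inner_le_norm _ _
        _ ≤ M * (2 * ρ) :=
          mul_le_mul hwM hzx (norm_nonneg _) ((norm_nonneg _).trans hwM)
        _ = 2 * ρ * M := mul_comm _ _
    calc εhat = ∑ i, α i * ⟪w i, z i - xhat⟫ := hε.symm
      _ ≤ ∑ i, α i * (2 * ρ * M) :=
        Finset.sum_le_sum fun i _ => mul_le_mul_of_nonneg_left (hbound i) (hα i)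
      _ = 2 * ρ * M := by rw [← Finset.sum_mul, hαsum, one_mul]
end

section
/- Let γ > 0 be fixed and let (t^m)_{m≥1} and (t̂^m)_{m≥1} be two infinite sequences in ℝ^N satisfying ⟨t^i − t^{m+1}, t̂^m⟩ ≥ γ‖t̂^m‖² for all m ≥ 1 and all i = 1,…,m. If the sequence (t^i) is bounded, then t̂^m → 0 as m → ∞. -/
/-!
By Cauchy–Schwarz the hypothesis gives `γ ‖that m‖ ≤ ‖t i - t (m + 1)‖` for all `1 ≤ i ≤ m`.
If `that` did not tend to `0`, there would be infinitely many `m` with `‖that m‖ ≥ ε`, and the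
corresponding points `t (m + 1)` would be pairwise at distance at least `γ ε`. A bounded sequence
in `ℝ^N` has a Cauchy subsequence, so this is impossible.
-/

open scoped RealInnerProductSpace
open Filter Topology

theorem mul_norm_le_dist_of_inner {N : ℕ} {γ : ℝ} {x y v : Euc N}
    (h : ⟪x - y, v⟫ ≥ γ * ‖v‖ ^ 2) : γ * ‖v‖ ≤ dist x y := by
  rw [dist_eq_norm]
  rcases (norm_nonneg v).eq_or_lt with h0 | h0
  · rw [← h0, mul_zero]
    exact norm_nonneg _
  · have h1 := real_inner_le_norm (x - y) v
    refine le_of_mul_le_mul_right ?_ h0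
    nlinarith

/-- if `⟪t i - t (m+1), t̂ m⟫ ≥ γ ‖t̂ m‖²` for all `m ≥ 1` and
`1 ≤ i ≤ m`, and `t` is bounded, then `t̂ m → 0`. -/
theorem stmt6 {N : ℕ} (γ : ℝ) (hγ : 0 < γ) (t that : ℕ → Euc N)
    (h : ∀ m : ℕ, 1 ≤ m → ∀ i : ℕ, 1 ≤ i → i ≤ m →
      ⟪t i - t (m + 1), that m⟫ ≥ γ * ‖that m‖ ^ 2)
    (hbdd : ∃ C : ℝ, ∀ i : ℕ, ‖t i‖ ≤ C) :
    Filter.Tendsto that Filter.atTop (nhds 0) := by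
  obtain ⟨C, hC⟩ := hbdd
  rw [Metric.tendsto_nhds]
  intro ε hε
  by_contra hcon
  rw [Filter.not_eventually] at hcon
  obtain ⟨φ, hφ, hφε⟩ := Filter.extraction_of_frequently_atTop hcon
  obtain ⟨a, -, ψ, hψ, hlim⟩ := (isCompact_closedBall (0 : Euc N) C).tendsto_subseq
    (x := fun n => t (φ n + 1)) (fun n => by simpa using hC (φ n + 1))
  obtain ⟨K, hK⟩ := Metric.cauchySeq_iff.1 hlim.cauchySeq (γ * ε) (mul_pos hγ hε)
  -- Strict monotonicity makes `i = φ (ψ K) + 1` an admissible index for `m = φ (ψ (K + 1))`.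
  have hlt : φ (ψ K) < φ (ψ (K + 1)) := hφ (hψ K.lt_succ_self)
  have h1 : dist (t (φ (ψ K) + 1)) (t (φ (ψ (K + 1)) + 1)) < γ * ε :=
    hK K le_rfl (K + 1) K.le_succ
  have h2 := mul_norm_le_dist_of_inner
    (h (φ (ψ (K + 1))) (by omega) (φ (ψ K) + 1) (by omega) (by omega))
  have h3 : ε ≤ ‖that (φ (ψ (K + 1)))‖ := by
    simpa [dist_zero_right] using hφε (ψ (K + 1))
  have h4 := mul_le_mul_of_nonneg_left h3 hγ.le
  linarith
end

section
/- Let T : ℝ^N → 2^{ℝ^N} be a monotone operator, let x, y ∈ ℝ^N, ξ ∈ T(y) with ξ ≠ 0 and ⟨x − y, ξ⟩ ≥ 0, and let x* ∈ ℝ^N satisfy 0 ∈ T(x*). Define x⁺ := x − (⟨x − y, ξ⟩ / ‖ξ‖²) ξ. Then ‖x⁺ − x*‖² ≤ ‖x − x*‖² − ‖x⁺ − x‖². -/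
/-!
Monotonicity puts every zero `xstar` of `T` in the halfspace `H_{y,ξ}`, and `xplus = x - c • ξ` is
the projection of `x` onto it. Expanding the square, with `‖c • ξ‖² = c * ⟪x - y, ξ⟫`, gives
`‖x - xstar‖² - ‖xplus - x‖² - ‖xplus - xstar‖² = 2 * c * ⟪y - xstar, ξ⟫`,
and both `c` and the inner product on the right are nonnegative.
-/

open scoped RealInnerProductSpace
open Filter Topology

/-- Fejér-type decrease for the projection step onto the
halfspace `H_{y,ξ}`. -/
theorem stmt10 {N : ℕ} (T : Euc N → Set (Euc N)) (hT : IsMonotoneOp T)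
    (x y ξ : Euc N) (hξ : ξ ∈ T y) (hξ0 : ξ ≠ 0)
    (hpos : 0 ≤ ⟪x - y, ξ⟫)
    (xstar : Euc N) (hxstar : (0 : Euc N) ∈ T xstar)
    (xplus : Euc N) (hxplus : xplus = x - (⟪x - y, ξ⟫ / ‖ξ‖ ^ 2) • ξ) :
    ‖xplus - xstar‖ ^ 2 ≤ ‖x - xstar‖ ^ 2 - ‖xplus - x‖ ^ 2 := by
  -- Monotonicity on the pairs `(y, ξ)` and `(xstar, 0)`: `xstar` lies in the halfspace `H_{y,ξ}`.
  have hmono : 0 ≤ ⟪y - xstar, ξ⟫ := by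
    have h := hT y xstar ξ 0 hξ hxstar
    rwa [sub_zero, real_inner_comm] at h
  have hsplit : ⟪x - xstar, ξ⟫ = ⟪x - y, ξ⟫ + ⟪y - xstar, ξ⟫ := by
    rw [← inner_add_left, sub_add_sub_cancel]
  have hn : ‖ξ‖ ^ 2 ≠ 0 := pow_ne_zero 2 (norm_ne_zero_iff.mpr hξ0)
  obtain ⟨c, hc⟩ : ∃ c, c = ⟪x - y, ξ⟫ / ‖ξ‖ ^ 2 := ⟨_, rfl⟩
  have hc0 : 0 ≤ c := hc ▸ div_nonneg hpos (sq_nonneg _)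
  have hcs : c * ‖ξ‖ ^ 2 = ⟪x - y, ξ⟫ := by rw [hc, div_mul_cancel₀ _ hn]
  rw [← hc] at hxplus
  have h1 : xplus - xstar = (x - xstar) - c • ξ := by rw [hxplus]; abel
  have h2 : xplus - x = -(c • ξ) := by rw [hxplus]; abel
  have h3 : ‖c • ξ‖ ^ 2 = c * ⟪x - y, ξ⟫ := by
    rw [norm_smul, mul_pow, Real.norm_eq_abs, sq_abs, ← hcs]; ring
  rw [h1, h2, norm_neg, norm_sub_sq_real, real_inner_smul_right, hsplit, h3]
  linarith [mul_nonneg hc0 hmono]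
end

section
/- Let x, s, ξ ∈ ℝ^N with s ≠ 0 and ξ ≠ 0, let τ > 0, R > 0 and nonnegative integers j, l with l ≤ j + 1 be such that ⟨s, ξ⟩ ≥ (1/2)‖s‖² and ‖s‖ > τ·2^{−j}. Define y := x − (R·2^{−l}/‖s‖) s and x⁺ := x − (⟨x − y, ξ⟩/‖ξ‖²) ξ. Then ⟨x − y, ξ⟩ > τ·R·2^{−l−j−1} > 0 (so that x ∉ H_{y,ξ} := {z : ⟨z − y, ξ⟩ ≤ 0}), and ‖x⁺ − x‖ > τ·R·2^{−2(j+1)}/‖ξ‖. -/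
/-!
Since `x - y` is the multiple `(R 2^{-l} / ‖s‖) s` of `s`, the hypothesis `⟪s, ξ⟫ ≥ ‖s‖² / 2` gives
`⟪x - y, ξ⟫ ≥ R 2^{-l} ‖s‖ / 2`, and `‖s‖ > τ 2^{-j}` turns this into the first bound. The step
length is `‖x⁺ - x‖ = ⟪x - y, ξ⟫ / ‖ξ‖`, so the second bound follows from the first because `l ≤ j + 1`.
-/

open scoped RealInnerProductSpace
open Filter Topology

/-- quantitative lower bounds at a serious step: with
`y = x - (R 2^{-l}/‖s‖) s` and `x⁺` the projection of `x` onto `H_{y,ξ}`,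
if `⟪s, ξ⟫ ≥ ‖s‖²/2` and `‖s‖ > τ 2^{-j}` then
`⟪x - y, ξ⟫ > τ R 2^{-l-j-1} > 0` (so `x ∉ H_{y,ξ}`) and
`‖x⁺ - x‖ > τ R 2^{-2(j+1)}/‖ξ‖`. -/
theorem stmt11 {N : ℕ} (x s ξ : Euc N) (hs : s ≠ 0) (hξ : ξ ≠ 0)
    (τ R : ℝ) (hτ : 0 < τ) (hR : 0 < R) (j l : ℕ) (hl : l ≤ j + 1)
    (hsξ : ⟪s, ξ⟫ ≥ (1 / 2) * ‖s‖ ^ 2)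
    (hsτ : ‖s‖ > τ * (2 : ℝ) ^ (-(j : ℤ)))
    (y xplus : Euc N)
    (hy : y = x - ((R * (2 : ℝ) ^ (-(l : ℤ)) / ‖s‖)) • s)
    (hxplus : xplus = x - (⟪x - y, ξ⟫ / ‖ξ‖ ^ 2) • ξ) :
    ⟪x - y, ξ⟫ > τ * R * (2 : ℝ) ^ (-(l : ℤ) - j - 1) ∧
    (0 : ℝ) < τ * R * (2 : ℝ) ^ (-(l : ℤ) - j - 1) ∧
    x ∉ {z : Euc N | ⟪z - y, ξ⟫ ≤ 0} ∧
    ‖xplus - x‖ > τ * R * (2 : ℝ) ^ (-(2 * ((j : ℤ) + 1))) / ‖ξ‖ := by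
  have hsn : 0 < ‖s‖ := norm_pos_iff.mpr hs
  have hξn : 0 < ‖ξ‖ := norm_pos_iff.mpr hξ
  have hinner : ⟪x - y, ξ⟫ = R * (2 : ℝ) ^ (-(l : ℤ)) / ‖s‖ * ⟪s, ξ⟫ := by
    rw [hy, sub_sub_cancel, real_inner_smul_left]
  have hpow : (2 : ℝ) ^ (-(l : ℤ) - j - 1)
      = (2 : ℝ) ^ (-(l : ℤ)) * (2 : ℝ) ^ (-(j : ℤ)) / 2 := by
    rw [zpow_sub_one₀ two_ne_zero, sub_eq_add_neg, zpow_add₀ two_ne_zero, div_eq_mul_inv]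
  have hpos : (0 : ℝ) < τ * R * (2 : ℝ) ^ (-(l : ℤ) - j - 1) := by positivity
  have hmain : τ * R * (2 : ℝ) ^ (-(l : ℤ) - j - 1) < ⟪x - y, ξ⟫ := by
    calc τ * R * (2 : ℝ) ^ (-(l : ℤ) - j - 1)
        = R * (2 : ℝ) ^ (-(l : ℤ)) / 2 * (τ * (2 : ℝ) ^ (-(j : ℤ))) := by rw [hpow]; ring
      _ < R * (2 : ℝ) ^ (-(l : ℤ)) / 2 * ‖s‖ := by gcongr
      _ = R * (2 : ℝ) ^ (-(l : ℤ)) / ‖s‖ * ((1 / 2) * ‖s‖ ^ 2) := by field_simp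
      _ ≤ R * (2 : ℝ) ^ (-(l : ℤ)) / ‖s‖ * ⟪s, ξ⟫ := by gcongr
      _ = ⟪x - y, ξ⟫ := hinner.symm
  have hipos : 0 < ⟪x - y, ξ⟫ := hpos.trans hmain
  have hstep : ‖xplus - x‖ = ⟪x - y, ξ⟫ / ‖ξ‖ := by
    rw [hxplus, norm_sub_rev, sub_sub_cancel, norm_smul, Real.norm_of_nonneg (by positivity)]
    field_simp
  refine ⟨hmain, hpos, fun h => not_le.mpr hipos h, ?_⟩
  -- Since `l ≤ j + 1`, the exponent `-2(j+1)` is at most `-l-j-1`.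
  have hexp : (2 : ℝ) ^ (-(2 * ((j : ℤ) + 1))) ≤ (2 : ℝ) ^ (-(l : ℤ) - j - 1) :=
    zpow_le_zpow_right₀ one_le_two (by omega)
  rw [hstep, gt_iff_lt]
  refine div_lt_div_of_pos_right (lt_of_le_of_lt ?_ hmain) hξn
  gcongr
end

section
/- Let T : ℝ^N → 2^{ℝ^N} be a maximal monotone operator and let x be in the interior of its domain D(T) := {z : T(z) ≠ ∅}. Then T is locally bounded at x, i.e. there exists a neighbourhood U of x such that the set T(U) := ⋃_{u ∈ U} T(u) is bounded. -/
/-!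
By monotonicity, if `v ∈ T p` for a fixed `p`, every `u ∈ T y` with `y` close to `x`
satisfies `⟪u, p - y⟫ ≤ ⟪v, p - y⟫`, which bounds `⟪u, p - x⟫` by a constant plus `‖u‖ ‖y - x‖`.
As `x` is interior to the domain, this applies to the `2 N` points `p = x ± r eᵢ` for some `r > 0`,
and bounds each `r |uᵢ|` by a constant plus `‖u‖ ‖y - x‖`. Summing over `i`, the error term is
at most `N ‖u‖ ‖y - x‖`, which is absorbed into the left side when `y` is close enough to `x`.
-/

open scoped RealInnerProductSpace
open Filter Topology

/-- A value of `T` at the single point `p` controls the component along `p - x` of all values of `T`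
near `x`, up to an error that shrinks with the distance to `x`. -/
lemma exists_inner_le {N : ℕ} {T : Euc N → Set (Euc N)} (hT : IsMonotoneOp T) (x : Euc N)
    {p : Euc N} (hp : (T p).Nonempty) :
    ∃ C : ℝ, ∀ y u, ‖y - x‖ ≤ 1 → u ∈ T y → ⟪u, p - x⟫ ≤ C + ‖u‖ * ‖y - x‖ := by
  obtain ⟨v, hv⟩ := hp
  refine ⟨‖v‖ * (‖p - x‖ + 1), fun y u hy hu => ?_⟩
  have h1 := hT p y v u hv hu
  rw [inner_sub_left] at h1
  have h2 : ⟪u, p - x⟫ = ⟪u, p - y⟫ + ⟪u, y - x⟫ := by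
    rw [← inner_add_right, sub_add_sub_cancel]
  have h3 : ⟪v, p - y⟫ ≤ ‖v‖ * (‖p - x‖ + 1) := by
    refine (real_inner_le_norm _ _).trans (mul_le_mul_of_nonneg_left ?_ (norm_nonneg _))
    calc ‖p - y‖ ≤ ‖p - x‖ + ‖x - y‖ := norm_sub_le_norm_sub_add_norm_sub _ _ _
      _ ≤ ‖p - x‖ + 1 := by rw [norm_sub_rev x y]; linarith
  have h4 := real_inner_le_norm u (y - x)
  linarith

lemma norm_le_sum_abs {N : ℕ} (u : Euc N) : ‖u‖ ≤ ∑ i, |u i| := by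
  conv_lhs => rw [← (EuclideanSpace.basisFun (Fin N) ℝ).sum_repr u]
  refine (norm_sum_le _ _).trans (Finset.sum_le_sum fun i _ => ?_)
  simp [norm_smul]

/-- a maximal monotone operator is locally bounded at every
point of the interior of its domain. -/
theorem stmt13 {N : ℕ} (T : Euc N → Set (Euc N))
    (hT : IsMaximalMonotoneOp T) (x : Euc N)
    (hx : x ∈ interior {z : Euc N | (T z).Nonempty}) :
    ∃ U ∈ nhds x, Bornology.IsBounded (⋃ u ∈ U, T u) := by
  obtain ⟨r, hr, hball⟩ := Metric.nhds_basis_closedBall.mem_iff.1 (mem_interior_iff_mem_nhds.1 hx)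
  have key : ∀ i : Fin N, ∃ C : ℝ, ∀ y u, ‖y - x‖ ≤ 1 → u ∈ T y →
      r * |u i| ≤ C + ‖u‖ * ‖y - x‖ := by
    intro i
    have hp : ∀ s : ℝ, |s| = r → (T (x + EuclideanSpace.single i s)).Nonempty := by
      intro s hs
      refine hball ?_
      simp [hs]
    obtain ⟨C₁, h₁⟩ := exists_inner_le hT.1 x (hp r (abs_of_pos hr))
    obtain ⟨C₂, h₂⟩ := exists_inner_le hT.1 x (hp (-r) (by rw [abs_neg, abs_of_pos hr]))
    refine ⟨max C₁ C₂, fun y u hy hu => ?_⟩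
    have a₁ := h₁ y u hy hu
    have a₂ := h₂ y u hy hu
    simp only [add_sub_cancel_left, EuclideanSpace.inner_single_right, conj_trivial] at a₁ a₂
    have b₁ := le_max_left C₁ C₂
    have b₂ := le_max_right C₁ C₂
    rcases abs_cases (u i) with ⟨h, _⟩ | ⟨h, _⟩ <;> rw [h] <;> linarith
  choose C hC using key
  -- On this ball `N * ‖y - x‖ ≤ r / 2`, so the error term is at most half of `r * ‖u‖`.
  have hδ : 0 < min 1 (r / (2 * (N + 1))) := by positivity
  refine ⟨_, Metric.closedBall_mem_nhds x hδ, isBounded_iff_forall_norm_le.2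
    ⟨2 * (∑ i, C i) / r, fun u hu => ?_⟩⟩
  simp only [Set.mem_iUnion, Metric.mem_closedBall, dist_eq_norm, exists_prop, le_min_iff] at hu
  obtain ⟨y, ⟨hy1, hy2⟩, hu⟩ := hu
  rw [le_div_iff₀ (by positivity)] at hy2
  have hsum : r * ‖u‖ ≤ (∑ i, C i) + N * (‖u‖ * ‖y - x‖) := by
    calc r * ‖u‖ ≤ r * ∑ i, |u i| := by gcongr; exact norm_le_sum_abs u
      _ = ∑ i, r * |u i| := Finset.mul_sum _ _ _
      _ ≤ ∑ i, (C i + ‖u‖ * ‖y - x‖) := Finset.sum_le_sum fun i _ => hC i y u hy1 hu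
      _ = _ := by simp [Finset.sum_add_distrib]
  rw [le_div_iff₀ hr]
  have h5 : ‖u‖ * (‖y - x‖ * (2 * (N + 1))) ≤ ‖u‖ * r :=
    mul_le_mul_of_nonneg_left hy2 (norm_nonneg _)
  have h6 : 0 ≤ ‖u‖ * ‖y - x‖ := by positivity
  linarith
end

section
/- Let T : ℝ^N → 2^{ℝ^N} be a maximal monotone operator whose domain is all of ℝ^N. Then T maps bounded sets to bounded sets: for every bounded set E ⊆ ℝ^N, the set T(E) := ⋃_{x ∈ E} T(x) is bounded. -/
/-!
A bounded set `E` lies in a ball of radius `r`, and the ball of radius `r + 1` lies in the convex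
hull of a finite set `u`. Choose `v y ∈ T y` for each `y ∈ u`. For `x ∈ E` and `w ∈ T x`,
monotonicity gives `⟪w, y - x⟫ ≤ ⟪v y, y - x⟫ ≤ C` at every vertex `y ∈ u`, with `C` independent of
`x` and `w`. The half-space `{z | ⟪w, z - x⟫ ≤ C}` is convex, so it contains the whole hull, in
particular the unit ball around `x`; taking `z = x + w / ‖w‖` yields `‖w‖ ≤ C`.
-/

open scoped RealInnerProductSpace
open Filter Topology

/-- a maximal monotone operator whose domain is all of `ℝ^N`
maps bounded sets to bounded sets. -/
theorem stmt14 {N : ℕ} (T : Euc N → Set (Euc N))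
    (hT : IsMaximalMonotoneOp T) (hdom : ∀ x : Euc N, (T x).Nonempty)
    (E : Set (Euc N)) (hE : Bornology.IsBounded E) :
    Bornology.IsBounded (⋃ x ∈ E, T x) := by
  obtain ⟨hmono, -⟩ := hT
  choose v hv using hdom
  obtain ⟨r, hr⟩ := hE.exists_norm_le
  obtain ⟨u, hu, -⟩ := Convex.exists_subset_interior_convexHull_finset_of_isCompact
    (convex_closedBall (0 : Euc N) (r + 1)) (isCompact_closedBall _ _) Filter.univ_mem
  set C : ℝ := ∑ y ∈ u, ‖v y‖ * (‖y‖ + |r|)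
  refine isBounded_iff_forall_norm_le.2 ⟨C, fun w hw => ?_⟩
  simp only [Set.mem_iUnion, exists_prop] at hw
  obtain ⟨x, hx, hw⟩ := hw
  have hvertex : ∀ y ∈ u, ⟪w, y - x⟫ ≤ C := by
    intro y hy
    have h1 := hmono y x (v y) w (hv y) hw
    rw [inner_sub_left] at h1
    calc ⟪w, y - x⟫ ≤ ⟪v y, y - x⟫ := by linarith
      _ ≤ ‖v y‖ * ‖y - x‖ := real_inner_le_norm _ _
      _ ≤ ‖v y‖ * (‖y‖ + |r|) := by
        gcongr
        exact (norm_sub_le y x).trans (by gcongr; exact (hr x hx).trans (le_abs_self r))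
      _ ≤ C := Finset.single_le_sum (f := fun y => ‖v y‖ * (‖y‖ + |r|))
        (fun _ _ => by positivity) hy
  have hconv : Convex ℝ {z : Euc N | ⟪w, z - x⟫ ≤ C} := by
    have : {z : Euc N | ⟪w, z - x⟫ ≤ C} = {z | innerSL ℝ w z ≤ C + ⟪w, x⟫} := by
      ext z
      simp [inner_sub_right]
    rw [this]
    exact convex_halfSpace_le (innerSL ℝ w).isLinear _
  have hhull : convexHull ℝ (u : Set (Euc N)) ⊆ {z | ⟪w, z - x⟫ ≤ C} :=
    convexHull_min hvertex hconv
  have hunit : ‖‖w‖⁻¹ • w‖ ≤ 1 := by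
    rw [norm_smul, norm_inv, norm_norm]
    exact inv_mul_le_one
  have hball : x + ‖w‖⁻¹ • w ∈ Metric.closedBall (0 : Euc N) (r + 1) := by
    rw [mem_closedBall_zero_iff]
    exact (norm_add_le _ _).trans (add_le_add (hr x hx) hunit)
  have h : ⟪w, (x + ‖w‖⁻¹ • w) - x⟫ ≤ C := hhull (interior_subset (hu hball))
  rw [add_sub_cancel_left, real_inner_smul_right, real_inner_self_eq_norm_sq] at h
  -- The identity `‖w‖⁻¹ * ‖w‖ ^ 2 = ‖w‖` holds at `w = 0` too, since `0⁻¹ = 0`.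
  have hnorm : ‖w‖⁻¹ * ‖w‖ ^ 2 = ‖w‖ := by
    rcases eq_or_ne ‖w‖ 0 with h0 | h0
    · simp [h0]
    · field_simp
  rwa [hnorm] at h
end

section
/- Let T : ℝ^N → 2^{ℝ^N} be a maximal monotone operator with T^{-1}(0) := {z : 0 ∈ T(z)} nonempty, and let (x^k) be a sequence in ℝ^N that is Fejér monotone relative to T^{-1}(0). Suppose there exist a subsequence (x^{k_q}) converging to some x* ∈ ℝ^N and sequences ε_q ≥ 0, x̂^q ∈ ℝ^N, ŝ^q ∈ T^{ε_q}(x̂^q) with ε_q → 0, x̂^q → x*, and ŝ^q → 0 as q → ∞. Then x* ∈ T^{-1}(0) and the full sequence (x^k) converges to x*. -/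
/-! The limit of the enlargement inequalities `⟪y* - ŝ^q, y - x̂^q⟫ ≥ -ε_q`, for a fixed point
`(y, y*)` of the graph of `T`, is `⟪y* - 0, y - x*⟫ ≥ 0`. So `(x*, 0)` is monotonically related to
the graph of `T`, and maximality puts it in the graph (`IsMaximalMonotoneOp.mem_of_related`).
Knowing that `x*` is a zero of `T`, Fejér monotonicity makes `‖x^k - x*‖` nonincreasing; a
subsequence of it tends to `0`, hence the whole sequence does. -/

open scoped RealInnerProductSpace
open Filter Topology

/-- A maximal monotone operator contains every pair monotonically related to its graph: adjoining
such a pair to the graph keeps the operator monotone. -/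
theorem IsMaximalMonotoneOp.mem_of_related {N : ℕ} {T : Euc N → Set (Euc N)}
    (hT : IsMaximalMonotoneOp T) {a b : Euc N}
    (h : ∀ y ys, ys ∈ T y → 0 ≤ ⟪ys - b, y - a⟫) : b ∈ T a := by
  have hS : (fun x => T x ∪ {u | x = a ∧ u = b}) = T := by
    refine hT.2 _ ?_ fun x => Set.subset_union_left
    rintro x y u v (hu | ⟨rfl, rfl⟩) (hv | ⟨rfl, rfl⟩)
    · exact hT.1 x y u v hu hv
    · exact h x u hu
    · rw [← neg_sub v u, ← neg_sub y x, inner_neg_neg]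
      exact h y v hv
    · simp
  rw [← hS]
  exact Or.inr ⟨rfl, rfl⟩

/-- convergence of the bundle method: if `(x^k)` is Fejér
monotone relative to `T⁻¹(0) ≠ ∅`, a subsequence `x^{k_q} → x*`, and there
are `ε_q ≥ 0`, `x̂^q`, `ŝ^q ∈ T^{ε_q}(x̂^q)` with `ε_q → 0`, `x̂^q → x*`,
`ŝ^q → 0`, then `x* ∈ T⁻¹(0)` and the full sequence converges to `x*`. -/
theorem stmt16 {N : ℕ} (T : Euc N → Set (Euc N))
    (hT : IsMaximalMonotoneOp T)
    (hsol : {z : Euc N | (0 : Euc N) ∈ T z}.Nonempty)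
    (x : ℕ → Euc N)
    (hFejer : ∀ z ∈ {z : Euc N | (0 : Euc N) ∈ T z}, ∀ k : ℕ,
      ‖x (k + 1) - z‖ ≤ ‖x k - z‖)
    (xstar : Euc N) (φ : ℕ → ℕ) (hφ : StrictMono φ)
    (hsub : Filter.Tendsto (x ∘ φ) Filter.atTop (nhds xstar))
    (ε : ℕ → ℝ) (xhat shat : ℕ → Euc N)
    (hε : ∀ q, 0 ≤ ε q) (hshat : ∀ q, shat q ∈ enl T (ε q) (xhat q))
    (hεlim : Filter.Tendsto ε Filter.atTop (nhds 0))
    (hxhatlim : Filter.Tendsto xhat Filter.atTop (nhds xstar))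
    (hshatlim : Filter.Tendsto shat Filter.atTop (nhds 0)) :
    (0 : Euc N) ∈ T xstar ∧ Filter.Tendsto x Filter.atTop (nhds xstar) := by
  have hzero : (0 : Euc N) ∈ T xstar := by
    refine hT.mem_of_related fun y ys hy => ?_
    have hlim : Tendsto (fun q => ⟪ys - shat q, y - xhat q⟫) atTop (𝓝 ⟪ys - 0, y - xstar⟫) :=
      (hshatlim.const_sub ys).inner (hxhatlim.const_sub y)
    have hneg : Tendsto (fun q => -ε q) atTop (𝓝 0) := by simpa using hεlim.neg
    exact le_of_tendsto_of_tendsto' hneg hlim fun q => hshat q y ys hy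
  refine ⟨hzero, ?_⟩
  have hanti : Antitone fun k => ‖x k - xstar‖ := antitone_nat_of_succ_le (hFejer xstar hzero)
  rw [tendsto_iff_norm_sub_tendsto_zero] at hsub ⊢
  exact (tendsto_iff_tendsto_subseq_of_antitone hanti hφ.tendsto_atTop).2 hsub
end
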